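/- Let 𝕜 be a field, σ an endomorphism of 𝕜[y] such that σ(y) = p(y) with deg(p) > 1 and σ(r) = r for all r ∈ 𝕜, and let δ be a σ-derivation with δ(r) = 0 for all r ∈ 𝕜. If a and b are two commuting elements of 𝕜[y][x;σ,δ], then there is a nonzero polynomial f(s,t) ∈ 𝕜[s,t] such that f(a,b) = 0. -/

import Mathlib

open Finsupp

noncomputable section

variable {R S : Type*}

/-- `S` is the Ore extension `R[x; σ, δ]` of `R` (embedded in `S` via `ι`):
`δ` is a `σ`-derivation of `R`, `S` is a free left `R`-module with basis `1, x, x², …`,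
and `x * r = σ(r) * x + δ(r)` for all `r ∈ R`. -/
structure IsOreExtension [Ring R] [Ring S] (ι : R →+* S) (σ : R →+* R) (δ : R → R)
    (x : S) : Prop where
  deriv_add : ∀ a b : R, δ (a + b) = δ a + δ b
  deriv_mul : ∀ a b : R, δ (a * b) = σ a * δ b + δ a * b
  repr_uniq : ∀ s : S, ∃! c : ℕ →₀ R, s = c.sum fun i r => ι r * x ^ i
  comm_rule : ∀ r : R, x * ι r = ι (σ r) * x + ι (δ r)

/-- The (unique) coefficient family of `s` with respect to the basis `1, x, x², …`. -/
def oreCoeff [Ring R] [Ring S] {ι : R →+* S} {σ : R →+* R} {δ : R → R} {x : S}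
    (h : IsOreExtension ι σ δ x) (s : S) : ℕ →₀ R :=
  (h.repr_uniq s).exists.choose

/-- The degree (in `x`) of an element of the Ore extension. -/
def oreDeg [Ring R] [Ring S] {ι : R →+* S} {σ : R →+* R} {δ : R → R} {x : S}
    (h : IsOreExtension ι σ δ x) (s : S) : ℕ :=
  (oreCoeff h s).support.sup id

/-- The leading coefficient (in `x`) of an element of the Ore extension. -/
def oreLeadCoeff [Ring R] [Ring S] {ι : R →+* S} {σ : R →+* R} {δ : R → R} {x : S}
    (h : IsOreExtension ι σ δ x) (s : S) : R :=
  oreCoeff h s (oreDeg h s)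

/-- The centralizer of `a`: all elements commuting with `a`. -/
def centralizerOf [Ring S] (a : S) : Set S := {b | b * a = a * b}

/-- The set of "polynomials in `P` with coefficients in `F`", i.e. all finite sums
`Σ_j ι(b_j) * P^j` with every `b_j ∈ F`. -/
def polysIn [Ring R] [Ring S] (ι : R →+* S) (F : Set R) (P : S) : Set S :=
  {s | ∃ d : ℕ →₀ R, (∀ j, d j ∈ F) ∧ s = d.sum fun j b => ι b * P ^ j}

/-- The subset `M` of `S` is a free module of rank at most `nbound` over the coefficient
subring `coeffs ⊆ S` (acting by left multiplication). -/
def IsFreeModuleOfRankAtMost [Ring S] (coeffs : Set S) (M : Set S) (nbound : ℕ) : Prop :=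
  ∃ m ≤ nbound, ∃ u : Fin m → S, (∀ i, u i ∈ M) ∧
    ∀ e ∈ M, ∃! c : Fin m → S, (∀ i, c i ∈ coeffs) ∧ e = ∑ i, c i * u i

/-- The subset `M` of `S` is a free module of finite rank over the coefficient
subring `coeffs ⊆ S` (acting by left multiplication). -/
def IsFreeModuleOfFiniteRank [Ring S] (coeffs : Set S) (M : Set S) : Prop :=
  ∃ m : ℕ, ∃ u : Fin m → S, (∀ i, u i ∈ M) ∧
    ∀ e ∈ M, ∃! c : Fin m → S, (∀ i, c i ∈ coeffs) ∧ e = ∑ i, c i * u i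

/-- A subset `F` of a ring is a field (with the induced operations): it is nontrivial and
every nonzero element of `F` has a multiplicative inverse lying in `F`. -/
def IsFieldSubset [Ring R] (F : Set R) : Prop :=
  (0 : R) ≠ 1 ∧ ∀ a ∈ F, a ≠ 0 → ∃ b ∈ F, a * b = 1

/-!
Suppose `e` has positive degree `n` in `x`, with leading coefficient `r`. If an element of degree
`N` with leading coefficient `u` commutes with `e`, then `u * σ^[N] r = r * σ^[n] u`. As `σ`
multiplies degrees in `y` by `deg p > 1`, this determines `deg u`. So a single linear functional, a
coefficient of `u`, detects whether the `x`-degree of an element of the centralizer of `e` drops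
below `N`, and the elements of degree at most `N` in this centralizer have rank at most `N + 1`.
If `a` or `b` has positive degree, take it for `e`: the quadratically many monomials `a ^ i * b ^ j`
then cannot be linearly independent in a space growing linearly. Otherwise `a` and `b` lie in
`K[y]`, which grows linearly as well.
-/

namespace IsOreExtension

section Coefficients

variable [Ring R] [Ring S] {ι : R →+* S} {σ : R →+* R} {δ : R → R} {x : S}
  (h : IsOreExtension ι σ δ x)

include h

lemma deriv_zero : δ 0 = 0 := by
  simpa using h.deriv_add 0 0

lemma x_mul_monomial (r : R) (i : ℕ) :
    x * (ι r * x ^ i) = ι (σ r) * x ^ (i + 1) + ι (δ r) * x ^ i := by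
  rw [← mul_assoc, h.comm_rule, add_mul, mul_assoc, ← pow_succ']

lemma sum_oreCoeff (s : S) : (oreCoeff h s).sum (fun i r => ι r * x ^ i) = s :=
  (h.repr_uniq s).exists.choose_spec.symm

lemma oreCoeff_eq_of_sum_eq {s : S} {c : ℕ →₀ R} (hc : c.sum (fun i r => ι r * x ^ i) = s) :
    oreCoeff h s = c :=
  (h.repr_uniq s).unique (h.sum_oreCoeff s).symm hc.symm

@[elab_as_elim]
lemma induction_on {P : S → Prop} (s : S) (add : ∀ s t, P s → P t → P (s + t))
    (monomial : ∀ r i, P (ι r * x ^ i)) : P s := by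
  rw [← h.sum_oreCoeff s]
  exact Finset.sum_induction _ P add (by simpa using monomial 0 0) fun i _ => monomial _ i

lemma oreCoeff_monomial (r : R) (i : ℕ) : oreCoeff h (ι r * x ^ i) = single i r :=
  h.oreCoeff_eq_of_sum_eq (sum_single_index (by simp))

lemma oreCoeff_one : oreCoeff h 1 = single 0 1 := by
  simpa using h.oreCoeff_monomial 1 0

lemma oreCoeff_add (s t : S) : oreCoeff h (s + t) = oreCoeff h s + oreCoeff h t := by
  apply h.oreCoeff_eq_of_sum_eq
  rw [sum_add_index' (by simp) (by simp [add_mul]), h.sum_oreCoeff, h.sum_oreCoeff]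

/-- The `n`-th coefficient with respect to the basis `1, x, x², …`, as an additive map. -/
def coeffAddHom (n : ℕ) : S →+ R :=
  AddMonoidHom.mk' (fun s => oreCoeff h s n) fun s t => by rw [h.oreCoeff_add, Finsupp.add_apply]

lemma oreCoeff_map_mul (r : R) (s : S) (n : ℕ) :
    oreCoeff h (ι r * s) n = r * oreCoeff h s n := by
  induction s using h.induction_on with
  | add s t hs ht => simp only [mul_add, oreCoeff_add, Finsupp.add_apply, hs, ht]
  | monomial t i =>
    rw [← mul_assoc, ← map_mul, h.oreCoeff_monomial, h.oreCoeff_monomial, ← smul_eq_mul,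
      ← smul_single, Finsupp.smul_apply, smul_eq_mul]

lemma oreCoeff_x_mul_succ (s : S) (n : ℕ) :
    oreCoeff h (x * s) (n + 1) = σ (oreCoeff h s n) + δ (oreCoeff h s (n + 1)) := by
  induction s using h.induction_on with
  | add s t hs ht =>
    simp only [mul_add, oreCoeff_add, Finsupp.add_apply, hs, ht, map_add, h.deriv_add]
    abel
  | monomial r i =>
    rw [h.x_mul_monomial, h.oreCoeff_add]
    simp only [oreCoeff_monomial, Finsupp.add_apply, single_apply, add_left_inj, apply_ite σ,
      apply_ite δ, map_zero, h.deriv_zero]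

lemma oreCoeff_mul (s t : S) (n : ℕ) :
    oreCoeff h (s * t) n = (oreCoeff h s).sum fun i r => r * oreCoeff h (x ^ i * t) n := by
  nth_rw 1 [← h.sum_oreCoeff s]
  rw [Finsupp.sum, Finset.sum_mul]
  refine (map_sum (h.coeffAddHom n) _ _).trans (Finset.sum_congr rfl fun i _ => ?_)
  rw [mul_assoc]
  exact h.oreCoeff_map_mul _ _ _

end Coefficients

section Degree

variable [Ring R] [Ring S] {ι : R →+* S} {σ : R →+* R} {δ : R → R} {x : S}
  (h : IsOreExtension ι σ δ x) {s t : S} {m n : ℕ}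

include h

lemma oreDeg_le_iff : oreDeg h s ≤ n ↔ ∀ i, n < i → oreCoeff h s i = 0 := by
  simp only [oreDeg, Finset.sup_le_iff, mem_support_iff, id]
  exact forall_congr' fun i => not_imp_comm.trans (by rw [not_le])

lemma oreLeadCoeff_ne_zero (hs : oreDeg h s ≠ 0) : oreLeadCoeff h s ≠ 0 := by
  have hsupp : (oreCoeff h s).support.Nonempty := by
    rw [Finset.nonempty_iff_ne_empty]
    intro hempty
    exact hs (by rw [oreDeg, hempty, Finset.sup_empty, bot_eq_zero])
  obtain ⟨i, hi, hmax⟩ := Finset.exists_mem_eq_sup _ hsupp id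
  rw [oreLeadCoeff, oreDeg, hmax]
  exact mem_support_iff.1 hi

lemma eq_map_of_oreDeg_eq_zero (hs : oreDeg h s = 0) : s = ι (oreCoeff h s 0) := by
  have hcoeff : oreCoeff h s = single 0 (oreCoeff h s 0) := by
    ext i
    rcases i.eq_zero_or_pos with rfl | hi
    · rw [single_eq_same]
    · rw [single_eq_of_ne hi.ne', h.oreDeg_le_iff.1 hs.le i hi]
  conv_lhs => rw [← h.sum_oreCoeff s, hcoeff, sum_single_index (by simp), pow_zero, mul_one]

lemma oreDeg_x_mul_le (hs : oreDeg h s ≤ n) : oreDeg h (x * s) ≤ n + 1 := by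
  rw [h.oreDeg_le_iff] at hs ⊢
  rintro (_ | i) hi
  · omega
  · rw [h.oreCoeff_x_mul_succ, hs i (by omega), hs (i + 1) (by omega), map_zero, h.deriv_zero,
      add_zero]

lemma oreDeg_x_pow_mul_le (hs : oreDeg h s ≤ n) (k : ℕ) : oreDeg h (x ^ k * s) ≤ k + n := by
  induction k with
  | zero => simpa using hs
  | succ k ih =>
    rw [pow_succ', mul_assoc, add_right_comm]
    exact h.oreDeg_x_mul_le ih

lemma oreCoeff_x_pow_mul_of_oreDeg_le (hs : oreDeg h s ≤ n) (k : ℕ) :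
    oreCoeff h (x ^ k * s) (k + n) = σ^[k] (oreCoeff h s n) := by
  induction k with
  | zero => simp
  | succ k ih =>
    have htop : oreCoeff h (x ^ k * s) (k + n + 1) = 0 :=
      h.oreDeg_le_iff.1 (h.oreDeg_x_pow_mul_le hs k) _ (Nat.lt_succ_self _)
    rw [pow_succ', mul_assoc, add_right_comm, h.oreCoeff_x_mul_succ, ih, htop, h.deriv_zero,
      add_zero, Function.iterate_succ_apply']

lemma oreDeg_mul_le (hs : oreDeg h s ≤ m) (ht : oreDeg h t ≤ n) : oreDeg h (s * t) ≤ m + n := by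
  rw [h.oreDeg_le_iff]
  intro k hk
  rw [h.oreCoeff_mul]
  refine Finset.sum_eq_zero fun i hi => ?_
  have him : i ≤ m := (Finset.le_sup (f := id) hi).trans hs
  simp only [h.oreDeg_le_iff.1 (h.oreDeg_x_pow_mul_le ht i) k (by omega), mul_zero]

/-- Only the `x ^ m`-term of `s` reaches degree `m + n`; moving `x ^ m` past the leading
coefficient of `t` twists it by `σ^[m]`. -/
lemma oreCoeff_mul_of_oreDeg_le (hs : oreDeg h s ≤ m) (ht : oreDeg h t ≤ n) :
    oreCoeff h (s * t) (m + n) = oreCoeff h s m * σ^[m] (oreCoeff h t n) := by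
  rw [h.oreCoeff_mul, sum_eq_single m, h.oreCoeff_x_pow_mul_of_oreDeg_le ht]
  · intro i hi him
    have hle : i ≤ m := (Finset.le_sup (f := id) (mem_support_iff.2 hi)).trans hs
    rw [h.oreDeg_le_iff.1 (h.oreDeg_x_pow_mul_le ht i) _ (by omega), mul_zero]
  · simp

lemma oreCoeff_mul_iterate_eq_of_commute (hst : Commute s t) (hs : oreDeg h s ≤ m)
    (ht : oreDeg h t ≤ n) :
    oreCoeff h s m * σ^[m] (oreCoeff h t n) = oreCoeff h t n * σ^[n] (oreCoeff h s m) := by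
  rw [← h.oreCoeff_mul_of_oreDeg_le hs ht, ← h.oreCoeff_mul_of_oreDeg_le ht hs, hst.eq, add_comm]

end Degree

section Constants

variable [CommRing R] [Ring S] {ι : R →+* S} {σ : R →+* R} {δ : R → R} {x : S}
  (h : IsOreExtension ι σ δ x) {r t : R}

include h

/-- Compare the two expansions of `δ (r * t) = δ (t * r)`. -/
lemma deriv_eq_zero_of_map_eq_self [NoZeroDivisors R] (hr : σ r = r) (ht : σ t ≠ t) :
    δ r = 0 := by
  have hcomm : δ (r * t) = δ (t * r) := by rw [mul_comm]
  rw [h.deriv_mul, h.deriv_mul, hr] at hcomm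
  have hprod : (σ t - t) * δ r = 0 := by linear_combination -hcomm
  exact (mul_eq_zero.1 hprod).resolve_left (sub_ne_zero.2 ht)

lemma commute_map_of_map_eq_self (hσ : σ r = r) (hδ : δ r = 0) (s : S) : Commute (ι r) s := by
  have hx : Commute (ι r) x := by
    rw [commute_iff_eq, h.comm_rule, hσ, hδ, map_zero, add_zero]
  induction s using h.induction_on with
  | add s t hs ht => exact hs.add_right ht
  | monomial t i => exact ((Commute.all r t).map ι).mul_right (hx.pow_right i)

end Constants

section Centralizer

variable {K : Type*} [CommSemiring K] [Ring R] [Algebra K R] [Ring S] [Algebra K S]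
  {ι : R →ₐ[K] S} {σ : R →+* R} {δ : R → R} {x : S}

/-- The `n`-th coefficient with respect to the basis `1, x, x², …`, as a linear map over a central
subring `K`. -/
def coeffLinearMap (h : IsOreExtension (ι : R →+* S) σ δ x) (n : ℕ) : S →ₗ[K] R where
  __ := h.coeffAddHom n
  map_smul' k s := by
    have := h.oreCoeff_map_mul (algebraMap K R k) s n
    rwa [RingHom.coe_coe, ι.commutes, ← Algebra.smul_def, ← Algebra.smul_def] at this

lemma coeffLinearMap_apply (h : IsOreExtension (ι : R →+* S) σ δ x) (n : ℕ) (s : S) :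
    h.coeffLinearMap n s = oreCoeff h s n := rfl

/-- The elements of degree at most `n` in `x` which commute with `e`. As `n` varies, these filter
the centralizer of `e`. -/
def centralizerDegLE (h : IsOreExtension (ι : R →+* S) σ δ x) (e : S) (n : ℕ) :
    Submodule K S where
  carrier := {s | Commute s e ∧ oreDeg h s ≤ n}
  zero_mem' := ⟨Commute.zero_left e, h.oreDeg_le_iff.2 fun i _ => map_zero (h.coeffLinearMap i)⟩
  add_mem' := by
    rintro s t ⟨hse, hs⟩ ⟨hte, ht⟩
    refine ⟨hse.add_left hte, ?_⟩
    simp only [h.oreDeg_le_iff, ← h.coeffLinearMap_apply] at hs ht ⊢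
    intro i hi
    rw [map_add, hs i hi, ht i hi, add_zero]
  smul_mem' := by
    rintro k s ⟨hse, hs⟩
    refine ⟨hse.smul_left k, ?_⟩
    simp only [h.oreDeg_le_iff, ← h.coeffLinearMap_apply] at hs ⊢
    intro i hi
    rw [map_smul, hs i hi, smul_zero]

variable (h : IsOreExtension (ι : R →+* S) σ δ x)

lemma centralizerDegLE_mono (e : S) : Monotone (h.centralizerDegLE e) :=
  fun _ _ hmn _ hs => ⟨hs.1, hs.2.trans hmn⟩

lemma gradedMonoid_centralizerDegLE (e : S) :
    SetLike.GradedMonoid (h.centralizerDegLE e) where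
  one_mem := by
    refine ⟨Commute.one_left e, h.oreDeg_le_iff.2 fun i hi => ?_⟩
    rw [h.oreCoeff_one, single_eq_of_ne hi.ne']
  mul_mem _ _ _ _ hs ht := ⟨hs.1.mul_left ht.1, h.oreDeg_mul_le hs.2 ht.2⟩

end Centralizer

end IsOreExtension

section Growth

universe u v

lemma rank_le_rank_add_one_of_ker_le {K : Type u} {M : Type v} [Ring K] [StrongRankCondition K]
    [HasRankNullity.{v} K] [AddCommGroup M] [Module K M] {A B : Submodule K M} (f : M →ₗ[K] K)
    (hf : ∀ s ∈ A, f s = 0 → s ∈ B) : Module.rank K A ≤ Module.rank K B + 1 := by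
  let g : A →ₗ[K] K := f.domRestrict A
  have hker : Module.rank K (LinearMap.ker g) ≤ Module.rank K B := by
    rw [← rank_map_eq A.injective_subtype]
    refine Submodule.rank_mono ?_
    rintro _ ⟨s, hs, rfl⟩
    exact hf s s.2 hs
  have hrange : Module.rank K (LinearMap.range g) ≤ 1 :=
    (Submodule.rank_le _).trans (Module.rank_self K).le
  rw [← Cardinal.lift_le.{u}, ← g.lift_rank_range_add_rank_ker, add_comm, Cardinal.lift_add]
  exact add_le_add (Cardinal.lift_le.2 hker) (by simpa using hrange)

/-- The `(m + n + 2) ^ 2` products `a ^ i * b ^ j` with `i, j ≤ m + n + 1` lie in a submodule of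
rank at most `(m + n + 1) * (m + n) + 1`. -/
lemma not_linearIndependent_pow_mul_pow {K A : Type*} [CommSemiring K] [Nontrivial K]
    [Semiring A] [Algebra K A] (G : ℕ → Submodule K A) [SetLike.GradedMonoid G]
    (hmono : Monotone G) (hrank : ∀ n, Module.rank K (G n) ≤ n + 1) {a b : A} {m n : ℕ}
    (ha : a ∈ G m) (hb : b ∈ G n) :
    ¬ LinearIndependent K fun q : ℕ × ℕ => a ^ q.1 * b ^ q.2 := by
  intro hli
  set M := m + n + 1
  have hmem (q : Fin (M + 1) × Fin (M + 1)) :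
      a ^ (q.1 : ℕ) * b ^ (q.2 : ℕ) ∈ G (M * (m + n)) := by
    refine hmono ?_ (SetLike.mul_mem_graded (SetLike.pow_mem_graded (q.1 : ℕ) ha)
      (SetLike.pow_mem_graded (q.2 : ℕ) hb))
    rw [smul_eq_mul, smul_eq_mul, mul_add]
    gcongr <;> omega
  have hli' : LinearIndependent K fun q : Fin (M + 1) × Fin (M + 1) =>
      (⟨_, hmem q⟩ : G (M * (m + n))) :=
    .of_comp (G _).subtype
      (hli.comp (Prod.map Fin.val Fin.val) (Fin.val_injective.prodMap Fin.val_injective))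
  have hcard := hli'.cardinal_lift_le_rank.trans (Cardinal.lift_le.2 (hrank _))
  have hle : (M + 1) * (M + 1) ≤ M * (m + n) + 1 := by
    simp only [Cardinal.mk_fintype, Fintype.card_prod, Fintype.card_fin, Cardinal.lift_natCast,
      Cardinal.lift_add, Cardinal.lift_one] at hcard
    exact_mod_cast hcard
  have hlt : m + n < M := Nat.lt_succ_self _
  nlinarith

end Growth

section Polynomial

open Polynomial

lemma natDegree_iterate_compRingHom {K : Type*} [CommSemiring K] [NoZeroDivisors K]
    (p u : K[X]) (n : ℕ) :
    ((compRingHom p)^[n] u).natDegree = u.natDegree * p.natDegree ^ n := by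
  induction n with
  | zero => simp
  | succ n ih =>
    rw [Function.iterate_succ_apply', coe_compRingHom, natDegree_comp, ← coe_compRingHom, ih,
      pow_succ, mul_assoc]

variable {K : Type*} [CommRing K]

lemma not_linearIndependent_polynomial_pow_mul_pow [Nontrivial K] (f g : K[X]) :
    ¬ LinearIndependent K fun q : ℕ × ℕ => f ^ q.1 * g ^ q.2 := by
  let G (n : ℕ) : Submodule K K[X] := degreeLE K n
  have : SetLike.GradedMonoid G :=
    { one_mem := mem_degreeLE.2 degree_one_le
      mul_mem _ _ _ _ hu hw := mem_degreeLE.2 <| by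
        push_cast
        exact degree_mul_le_of_le (mem_degreeLE.1 hu) (mem_degreeLE.1 hw) }
  refine not_linearIndependent_pow_mul_pow G (fun m n hmn => degreeLE_mono (by exact_mod_cast hmn))
    (fun n => ?_) (mem_degreeLE.2 (degree_le_natDegree (p := f)))
    (mem_degreeLE.2 (degree_le_natDegree (p := g)))
  change Module.rank K (degreeLE K n) ≤ n + 1
  rw [← degreeLT_succ_eq_degreeLE, (degreeLTEquiv K (n + 1)).rank_eq, rank_fin_fun, Nat.cast_succ]

variable [NoZeroDivisors K] {p : K[X]}

lemma compRingHom_injective (hp : p.natDegree ≠ 0) : Function.Injective (compRingHom p) := by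
  refine (injective_iff_map_eq_zero _).2 fun u hu => ?_
  refine (comp_eq_zero_iff.1 hu).resolve_right fun ⟨_, hpC⟩ => hp ?_
  rw [hpC, natDegree_C]

lemma iterate_compRingHom_ne_zero (hp : p.natDegree ≠ 0) {u : K[X]} (hu : u ≠ 0) (n : ℕ) :
    (compRingHom p)^[n] u ≠ 0 := by
  intro h
  exact hu ((compRingHom_injective hp).iterate n (h.trans (iterate_map_zero _ n).symm))

/-- Comparing degrees gives `deg u * (deg p ^ n - 1) = deg r * (deg p ^ N - 1)`. -/
lemma natDegree_eq_of_mul_iterate_eq (hp : 1 < p.natDegree) {N n : ℕ} (hn : n ≠ 0) {u r : K[X]}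
    (hu : u ≠ 0) (hr : r ≠ 0)
    (hur : u * (compRingHom p)^[N] r = r * (compRingHom p)^[n] u) :
    u.natDegree = r.natDegree * (p.natDegree ^ N - 1) / (p.natDegree ^ n - 1) := by
  have hp0 : p.natDegree ≠ 0 := by omega
  have hdeg := congrArg natDegree hur
  rw [natDegree_mul hu (iterate_compRingHom_ne_zero hp0 hr N),
    natDegree_mul hr (iterate_compRingHom_ne_zero hp0 hu n), natDegree_iterate_compRingHom,
    natDegree_iterate_compRingHom] at hdeg
  have hn1 : 1 < p.natDegree ^ n := Nat.one_lt_pow hn hp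
  refine Nat.eq_div_of_mul_eq_left (by omega) ?_
  rw [Nat.mul_sub_one, Nat.mul_sub_one]
  omega

end Polynomial

namespace IsOreExtension

open Polynomial

variable {K : Type*} [CommRing K] [IsDomain K] [Ring S] [Algebra K S] {p : K[X]}
  {ι : K[X] →ₐ[K] S} {δ : K[X] → K[X]} {x : S}
  (h : IsOreExtension (ι : K[X] →+* S) (compRingHom p) δ x) {a b e : S}

/-- The only degree in `K[X]` that a nonzero coefficient of `x ^ n` can have in an element of
`centralizerDegLE h e n`, provided that `1 < p.natDegree` and `e` has positive degree in `x`. The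
division is then exact whenever such an element exists. -/
def topCoeffDeg (h : IsOreExtension (ι : K[X] →+* S) (compRingHom p) δ x) (e : S) (n : ℕ) : ℕ :=
  (oreLeadCoeff h e).natDegree * (p.natDegree ^ n - 1) / (p.natDegree ^ oreDeg h e - 1)

include h

lemma natDegree_oreCoeff_eq_topCoeffDeg (hp : 1 < p.natDegree) (he : oreDeg h e ≠ 0) {s : S}
    {n : ℕ} (hs : s ∈ h.centralizerDegLE e n) (hne : oreCoeff h s n ≠ 0) :
    (oreCoeff h s n).natDegree = h.topCoeffDeg e n :=
  natDegree_eq_of_mul_iterate_eq hp he hne (h.oreLeadCoeff_ne_zero he)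
    (h.oreCoeff_mul_iterate_eq_of_commute hs.1 hs.2 le_rfl)

lemma oreCoeff_eq_zero_of_coeff_eq_zero (hp : 1 < p.natDegree) (he : oreDeg h e ≠ 0) {s : S}
    {n : ℕ} (hs : s ∈ h.centralizerDegLE e n)
    (hcoeff : (oreCoeff h s n).coeff (h.topCoeffDeg e n) = 0) : oreCoeff h s n = 0 := by
  by_contra hne
  rw [← h.natDegree_oreCoeff_eq_topCoeffDeg hp he hs hne] at hcoeff
  exact hne (leadingCoeff_eq_zero.1 hcoeff)

lemma rank_centralizerDegLE_le (hp : 1 < p.natDegree) (he : oreDeg h e ≠ 0) (n : ℕ) :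
    Module.rank K (h.centralizerDegLE e n) ≤ n + 1 := by
  let leadFunctional (n : ℕ) : S →ₗ[K] K :=
    lcoeff K (h.topCoeffDeg e n) ∘ₗ h.coeffLinearMap n
  have hlead (n : ℕ) (s : S) (hs : s ∈ h.centralizerDegLE e n) (hs0 : leadFunctional n s = 0) :
      oreCoeff h s n = 0 := h.oreCoeff_eq_zero_of_coeff_eq_zero hp he hs hs0
  induction n with
  | zero =>
    have hbot : ∀ s ∈ h.centralizerDegLE e 0, leadFunctional 0 s = 0 → s ∈ (⊥ : Submodule K S) := by
      intro s hs hs0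
      rw [Submodule.mem_bot, h.eq_map_of_oreDeg_eq_zero (Nat.le_zero.1 hs.2), hlead 0 s hs hs0,
        map_zero]
    simpa using rank_le_rank_add_one_of_ker_le _ hbot
  | succ n ih =>
    have hker : ∀ s ∈ h.centralizerDegLE e (n + 1), leadFunctional (n + 1) s = 0 →
        s ∈ h.centralizerDegLE e n := by
      refine fun s hs hs0 => ⟨hs.1, h.oreDeg_le_iff.2 fun i hi => ?_⟩
      rcases (Nat.succ_le_of_lt hi).eq_or_lt with rfl | hlt
      · exact hlead _ s hs hs0
      · exact h.oreDeg_le_iff.1 hs.2 i hlt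
    push_cast
    exact (rank_le_rank_add_one_of_ker_le _ hker).trans (by gcongr)

lemma not_linearIndependent_of_mem_centralizer (hp : 1 < p.natDegree) (he : oreDeg h e ≠ 0)
    (hae : Commute a e) (hbe : Commute b e) :
    ¬ LinearIndependent K fun q : ℕ × ℕ => a ^ q.1 * b ^ q.2 :=
  have := h.gradedMonoid_centralizerDegLE e
  not_linearIndependent_pow_mul_pow (h.centralizerDegLE e) (h.centralizerDegLE_mono e)
    (h.rank_centralizerDegLE_le hp he) ⟨hae, le_rfl⟩ ⟨hbe, le_rfl⟩

theorem not_linearIndependent_of_commute (hp : 1 < p.natDegree) (hab : Commute a b) :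
    ¬ LinearIndependent K fun q : ℕ × ℕ => a ^ q.1 * b ^ q.2 := by
  by_cases ha : oreDeg h a = 0
  · by_cases hb : oreDeg h b = 0
    · rw [h.eq_map_of_oreDeg_eq_zero ha, h.eq_map_of_oreDeg_eq_zero hb]
      intro hli
      refine not_linearIndependent_polynomial_pow_mul_pow (oreCoeff h a 0) (oreCoeff h b 0)
        (.of_comp ι.toLinearMap ?_)
      simpa [Function.comp_def] using hli
    · exact h.not_linearIndependent_of_mem_centralizer hp hb hab (Commute.refl b)
  · exact h.not_linearIndependent_of_mem_centralizer hp ha (Commute.refl a) hab.symm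

end IsOreExtension

open Polynomial in
theorem richter_annihilating_polynomial_general {K : Type*} [CommRing K] [IsDomain K] [Ring S]
    (σ : K[X] →+* K[X]) (p : K[X]) (hp : 1 < p.natDegree)
    (hσC : ∀ a : K, σ (C a) = C a) (hσX : σ X = p)
    (δ : K[X] → K[X]) (ι : K[X] →+* S) (x : S) (h : IsOreExtension ι σ δ x)
    (a b : S) (hab : a * b = b * a) :
    ∃ c : ℕ × ℕ →₀ K, c ≠ 0 ∧
      (c.sum fun q k => ι (C k) * a ^ q.1 * b ^ q.2) = 0 := by
  have hX : σ X ≠ X := fun hfix => by simp [← hσX, hfix] at hp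
  have hδC (k : K) : δ (C k) = 0 := h.deriv_eq_zero_of_map_eq_self (hσC k) hX
  let _ : Algebra K S := (ι.comp C).toAlgebra' fun k => h.commute_map_of_map_eq_self (hσC k) (hδC k)
  let ιₐ : K[X] →ₐ[K] S := { ι with commutes' := fun _ => rfl }
  have hσ : σ = compRingHom p := ringHom_ext (by simp [hσC]) (by simp [hσX])
  have hS : IsOreExtension (ιₐ : K[X] →+* S) (compRingHom p) δ x := hσ ▸ h
  obtain ⟨c, hc, hc0⟩ : ∃ c : ℕ × ℕ →₀ K,
      Finsupp.linearCombination K (fun q : ℕ × ℕ => a ^ q.1 * b ^ q.2) c = 0 ∧ c ≠ 0 := by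
    simpa [linearIndependent_iff] using hS.not_linearIndependent_of_commute hp hab
  refine ⟨c, hc0, (Finsupp.sum_congr fun q _ => ?_).trans hc⟩
  exact mul_assoc _ _ _

open Polynomial in
/-- **Richter, Theorem 3.4.** Let `𝕜` be a field, `σ` an endomorphism of
`𝕜[y]` fixing `𝕜` with `σ(y) = p(y)` where `deg p > 1`, and `δ` a `σ`-derivation
vanishing on `𝕜`. If `a` and `b` are commuting elements of `𝕜[y][x; σ, δ]`, then there
is a nonzero polynomial `f(s,t) ∈ 𝕜[s,t]` with `f(a,b) = 0`. -/
theorem richter_annihilating_polynomial {K : Type*} [Field K] [Ring S]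
    (σ : K[X] →+* K[X]) (p : K[X]) (hp : 1 < p.natDegree)
    (hσC : ∀ a : K, σ (C a) = C a) (hσX : σ X = p)
    (δ : K[X] → K[X]) (hδC : ∀ a : K, δ (C a) = 0)
    (ι : K[X] →+* S) (x : S) (h : IsOreExtension ι σ δ x)
    (a b : S) (hab : a * b = b * a) :
    ∃ c : ℕ × ℕ →₀ K, c ≠ 0 ∧
      (c.sum fun q k => ι (C k) * a ^ q.1 * b ^ q.2) = 0 :=
  richter_annihilating_polynomial_general σ p hp hσC hσX δ ι x h a b hab
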